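/- arXiv:1701.00953 — 4 statements merged into one kernel-verified Lean document; each statement's English description precedes it below -/
import Mathlib

section
/- Let n ≥ 3 be an integer, ε > 0 and r₀ > e. Suppose f : [0,∞) → ℝ is a warping function (C², f(0)=0, f'(0)=1, f(r) > 0 and f''(r) ≥ 0 for all r > 0) satisfying f''(r) ≥ ((1/2 + ε)/(r² log r)) · f(r) for all r ≥ r₀. Then ∫₁^∞ f(s)^{n−3} (∫_s^∞ f(t)^{1−n} dt) ds < ∞; in particular, for every s ≥ 1 the inner integral ∫_s^∞ f(t)^{1−n} dt is finite. -/
open MeasureTheory Set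

/-!
Convexity and `f 0 = 0` make `f t / t` nondecreasing, so for `p > 2` we have
`∫ₛ^∞ f(t)^(1-p) dt ≤ s f(s)^(1-p) / (p - 2)`, and `∫ f(s)^(p-3) (∫ₛ^∞ f(t)^(1-p) dt) ds` is at most
`(p - 2)⁻¹ ∫ s / f(s)² ds`. To see that the latter converges, compare `f` by Sturm's theorem with
the supersolution `r (log r + T)^b` of `g'' = b g / (r² log r)`, where `1/2 < b ≤ 1`. The shift `T`
lets the Wronskian be nonnegative at the starting point; this only needs `f < r f'` there, which
strict convexity provides. Hence `f` dominates a multiple of `r (log r)^b` and the integrand is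
`O(1 / (r (log r)^(2b)))`, with `2b > 1`.
-/

section Convex

variable {f : ℝ → ℝ}

lemma monotoneOn_div_of_convexOn (hf : ConvexOn ℝ (Ici 0) f) (hf0 : f 0 = 0) :
    MonotoneOn (fun r => f r / r) (Ioi 0) := by
  intro x (hx : 0 < x) y (hy : 0 < y) hxy
  simpa [hf0] using hf.secant_mono self_mem_Ici hx.le hy.le hx.ne' hy.ne' hxy

lemma lt_mul_deriv_of_strictConvexOn {a r : ℝ} (hf : ConvexOn ℝ (Ici 0) f) (hf0 : f 0 = 0)
    (ha : 0 < a) (har : a < r) (hfa : StrictConvexOn ℝ (Ici a) f) (hfr : DifferentiableAt ℝ f r) :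
    f r < r * deriv f r := by
  have hr : 0 < r := ha.trans har
  have chord_le : f r / r ≤ slope f r a := by
    simpa [slope_def_field, hf0] using
      hf.secant_mono hr.le self_mem_Ici ha.le hr.ne har.ne ha.le
  have chord_lt : slope f r a < deriv f r := by
    rw [slope_comm]
    exact hfa.slope_lt_deriv self_mem_Ici har.le har hfr
  exact (div_lt_iff₀' hr).mp (chord_le.trans_lt chord_lt)

end Convex

section Sturm

variable {f f' f'' g g' g'' : ℝ → ℝ} {a : ℝ}

lemma monotoneOn_wronskian (hf : ∀ r ≥ a, HasDerivAt f (f' r) r)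
    (hf' : ∀ r ≥ a, HasDerivAt f' (f'' r) r) (hg : ∀ r ≥ a, HasDerivAt g (g' r) r)
    (hg' : ∀ r ≥ a, HasDerivAt g' (g'' r) r) (hfg : ∀ r ≥ a, f r * g'' r ≤ f'' r * g r) :
    MonotoneOn (fun r => f' r * g r - f r * g' r) (Ici a) := by
  have hW : ∀ r ≥ a, HasDerivAt (fun r => f' r * g r - f r * g' r)
      (f'' r * g r - f r * g'' r) r := fun r hr =>
    (((hf' r hr).mul (hg r hr)).sub ((hf r hr).mul (hg' r hr))).congr_deriv (by ring)
  refine monotoneOn_of_hasDerivWithinAt_nonneg (convex_Ici a)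
    (fun r hr => (hW r hr).continuousAt.continuousWithinAt)
    (fun r hr => (hW r (interior_subset hr)).hasDerivWithinAt) fun r hr => ?_
  exact sub_nonneg.mpr (hfg r (interior_subset hr))

lemma monotoneOn_div_of_sturm (hf : ∀ r ≥ a, HasDerivAt f (f' r) r)
    (hf' : ∀ r ≥ a, HasDerivAt f' (f'' r) r) (hg : ∀ r ≥ a, HasDerivAt g (g' r) r)
    (hg' : ∀ r ≥ a, HasDerivAt g' (g'' r) r) (hfg : ∀ r ≥ a, f r * g'' r ≤ f'' r * g r)
    (hg0 : ∀ r ≥ a, g r ≠ 0) (ha : f a * g' a ≤ f' a * g a) :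
    MonotoneOn (fun r => f r / g r) (Ici a) := by
  have hquot : ∀ r ≥ a, HasDerivAt (fun r => f r / g r)
      ((f' r * g r - f r * g' r) / g r ^ 2) r := fun r hr =>
    (hf r hr).div (hg r hr) (hg0 r hr)
  refine monotoneOn_of_hasDerivWithinAt_nonneg (convex_Ici a)
    (fun r hr => (hquot r hr).continuousAt.continuousWithinAt)
    (fun r hr => (hquot r (interior_subset hr)).hasDerivWithinAt) fun r hr => ?_
  have har : a ≤ r := interior_subset hr
  have wronskian_nonneg : 0 ≤ f' r * g r - f r * g' r :=
    (sub_nonneg.mpr ha).trans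
      (monotoneOn_wronskian hf hf' hg hg' hfg self_mem_Ici har har)
  positivity

end Sturm

section LogProfile

variable {b T x : ℝ}

lemma hasDerivAt_log_add_rpow (p : ℝ) (hx : x ≠ 0) (hL : Real.log x + T ≠ 0) :
    HasDerivAt (fun r => (Real.log r + T) ^ p) (p * (Real.log x + T) ^ (p - 1) / x) x :=
  (((Real.hasDerivAt_log hx).add_const T).rpow_const (Or.inl hL)).congr_deriv (by ring)

lemma hasDerivAt_mul_log_add_rpow (hx : x ≠ 0) (hL : Real.log x + T ≠ 0) :
    HasDerivAt (fun r => r * (Real.log r + T) ^ b)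
      ((Real.log x + T) ^ b + b * (Real.log x + T) ^ (b - 1)) x :=
  ((hasDerivAt_id' x).mul (hasDerivAt_log_add_rpow b hx hL)).congr_deriv (by field_simp)

lemma hasDerivAt_deriv_mul_log_add_rpow (hx : x ≠ 0) (hL : Real.log x + T ≠ 0) :
    HasDerivAt (fun r => (Real.log r + T) ^ b + b * (Real.log r + T) ^ (b - 1))
      ((b * (Real.log x + T) ^ (b - 1) + b * ((b - 1) * (Real.log x + T) ^ (b - 1 - 1))) / x) x :=
  ((hasDerivAt_log_add_rpow b hx hL).add
    ((hasDerivAt_log_add_rpow (b - 1) hx hL).const_mul b)).congr_deriv (by ring)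

lemma wronskian_mul_log_add_rpow {y v : ℝ} (hL : Real.log x + T ≠ 0) :
    v * (x * (Real.log x + T) ^ b) -
        y * ((Real.log x + T) ^ b + b * (Real.log x + T) ^ (b - 1)) =
      (Real.log x + T) ^ (b - 1) * ((Real.log x + T) * (x * v - y) - b * y) := by
  rw [Real.rpow_sub_one hL]
  field_simp
  ring

lemma mul_log_add_rpow_supersolution (hb : 0 ≤ b) (hb1 : b ≤ 1) (hT : 0 ≤ T) (hx : 1 < x) :
    (b * (Real.log x + T) ^ (b - 1) + b * ((b - 1) * (Real.log x + T) ^ (b - 1 - 1))) / x ≤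
      b / (x ^ 2 * Real.log x) * (x * (Real.log x + T) ^ b) := by
  have : 0 < x := by linarith
  have hlog : 0 < Real.log x := Real.log_pos hx
  have hL : 0 < Real.log x + T := by linarith
  have concave : b * ((b - 1) * (Real.log x + T) ^ (b - 1 - 1)) ≤ 0 :=
    mul_nonpos_of_nonneg_of_nonpos hb
      (mul_nonpos_of_nonpos_of_nonneg (by linarith) (by positivity))
  calc (b * (Real.log x + T) ^ (b - 1) + b * ((b - 1) * (Real.log x + T) ^ (b - 1 - 1))) / x
      ≤ b * (Real.log x + T) ^ (b - 1) / x := by gcongr; linarith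
    _ = b * (Real.log x + T) ^ b / x / (Real.log x + T) := by
        rw [Real.rpow_sub_one hL.ne']; ring
    _ ≤ b * (Real.log x + T) ^ b / x / Real.log x := by gcongr; linarith
    _ = b / (x ^ 2 * Real.log x) * (x * (Real.log x + T) ^ b) := by field_simp

end LogProfile

section Comparison

variable {f f' f'' : ℝ → ℝ} {a b : ℝ}

lemma monotoneOn_div_mul_log_add_rpow {T : ℝ} (hb : 0 ≤ b) (hb1 : b ≤ 1) (ha : 1 < a)
    (hf : ∀ r ≥ a, HasDerivAt f (f' r) r) (hf' : ∀ r ≥ a, HasDerivAt f' (f'' r) r)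
    (hpos : ∀ r ≥ a, 0 < f r) (hcurv : ∀ r ≥ a, b / (r ^ 2 * Real.log r) * f r ≤ f'' r)
    (hT : 0 ≤ T) (hfa : b * f a ≤ (Real.log a + T) * (a * f' a - f a)) :
    MonotoneOn (fun r => f r / (r * (Real.log r + T) ^ b)) (Ici a) := by
  have hr0 : ∀ r ≥ a, 0 < r := fun r hr => by linarith
  have hL : ∀ r ≥ a, 0 < Real.log r + T := fun r hr =>
    add_pos_of_pos_of_nonneg (Real.log_pos (by linarith)) hT
  have hg : ∀ r ≥ a, 0 < r * (Real.log r + T) ^ b := fun r hr =>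
    mul_pos (hr0 r hr) (Real.rpow_pos_of_pos (hL r hr) b)
  refine monotoneOn_div_of_sturm hf hf'
    (fun r hr => hasDerivAt_mul_log_add_rpow (hr0 r hr).ne' (hL r hr).ne')
    (fun r hr => hasDerivAt_deriv_mul_log_add_rpow (hr0 r hr).ne' (hL r hr).ne')
    (fun r hr => ?_) (fun r hr => (hg r hr).ne') ?_
  · have := mul_log_add_rpow_supersolution hb hb1 hT (ha.trans_le hr)
    calc _ ≤ f r * (b / (r ^ 2 * Real.log r) * (r * (Real.log r + T) ^ b)) :=
          mul_le_mul_of_nonneg_left this (hpos r hr).le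
      _ = b / (r ^ 2 * Real.log r) * f r * (r * (Real.log r + T) ^ b) := by ring
      _ ≤ _ := mul_le_mul_of_nonneg_right (hcurv r hr) (hg r hr).le
  · rw [← sub_nonneg, wronskian_mul_log_add_rpow (hL a le_rfl).ne']
    exact mul_nonneg (Real.rpow_nonneg (hL a le_rfl).le _) (sub_nonneg.mpr hfa)

lemma exists_mul_log_rpow_le (hb : 0 ≤ b) (hb1 : b ≤ 1) (ha : 1 < a)
    (hf : ∀ r ≥ a, HasDerivAt f (f' r) r) (hf' : ∀ r ≥ a, HasDerivAt f' (f'' r) r)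
    (hpos : ∀ r ≥ a, 0 < f r) (hcurv : ∀ r ≥ a, b / (r ^ 2 * Real.log r) * f r ≤ f'' r)
    (hfa : f a < a * f' a) :
    ∃ c > 0, ∀ r ≥ a, c * (r * Real.log r ^ b) ≤ f r := by
  have hfa_pos : 0 < f a := hpos a le_rfl
  have hdefect : 0 < a * f' a - f a := sub_pos.mpr hfa
  have hlog : ∀ r ≥ a, 0 < Real.log r := fun r hr => Real.log_pos (by linarith)
  obtain ⟨T, hT, hT_eq⟩ : ∃ T ≥ 0, T * (a * f' a - f a) = b * f a :=
    ⟨b * f a / (a * f' a - f a), by positivity, div_mul_cancel₀ _ hdefect.ne'⟩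
  have hquot := monotoneOn_div_mul_log_add_rpow hb hb1 ha hf hf' hpos hcurv hT
    (by linarith [mul_pos (hlog a le_rfl) hdefect])
  have hg : ∀ r ≥ a, 0 < r * (Real.log r + T) ^ b := fun r hr =>
    mul_pos (by linarith)
      (Real.rpow_pos_of_pos (add_pos_of_pos_of_nonneg (hlog r hr) hT) b)
  have hc : 0 < f a / (a * (Real.log a + T) ^ b) := div_pos hfa_pos (hg a le_rfl)
  refine ⟨_, hc, fun r hr => ?_⟩
  have hr0 : 0 < r := by linarith
  calc f a / (a * (Real.log a + T) ^ b) * (r * Real.log r ^ b)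
      ≤ f a / (a * (Real.log a + T) ^ b) * (r * (Real.log r + T) ^ b) := by
        have := hlog r hr
        gcongr
        linarith
    _ ≤ f r := (le_div_iff₀ (hg r hr)).mp (hquot self_mem_Ici hr hr)

end Comparison

section Growth

open Asymptotics Filter

variable {f : ℝ → ℝ} {b : ℝ}

lemma mul_log_rpow_isBigO (hb : 0 < b) (hb1 : b ≤ 1) (hf : ContDiff ℝ 2 f)
    (hconv : ConvexOn ℝ (Ici 0) f) (hf0 : f 0 = 0) (hpos : ∀ r > 0, 0 < f r)
    (hcurv : ∀ᶠ r in atTop, b / (r ^ 2 * Real.log r) * f r ≤ deriv (deriv f) r) :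
    (fun r => r * Real.log r ^ b) =O[atTop] f := by
  obtain ⟨a, ha⟩ := eventually_atTop.mp (hcurv.and (eventually_gt_atTop 1))
  have ha1 : 1 < a := (ha a le_rfl).2
  have hstrict : StrictConvexOn ℝ (Ici a) f := by
    refine strictConvexOn_of_deriv2_pos (convex_Ici a) hf.continuous.continuousOn fun r hr => ?_
    have hr := ha r (interior_subset hr)
    have hr1 : 1 < r := hr.2
    have hlog := Real.log_pos hr1
    have hfr := hpos r (by linarith)
    exact lt_of_lt_of_le (by positivity) hr.1
  obtain ⟨c, hc, hle⟩ := exists_mul_log_rpow_le (a := a + 1) hb.le hb1 (by linarith)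
    (fun r _ => (hf.differentiable two_ne_zero r).hasDerivAt)
    (fun r _ => (hf.differentiable_deriv_two r).hasDerivAt)
    (fun r hr => hpos r (by linarith)) (fun r hr => (ha r (by linarith)).1)
    (lt_mul_deriv_of_strictConvexOn hconv hf0 (by linarith) (lt_add_one a) hstrict
      (hf.differentiable two_ne_zero _))
  refine IsBigO.of_bound c⁻¹ ?_
  filter_upwards [eventually_ge_atTop (a + 1)] with r hr
  have hlog : 0 < Real.log r := Real.log_pos (by linarith)
  rw [Real.norm_of_nonneg (mul_nonneg (by linarith) (by positivity)),
    Real.norm_of_nonneg (hpos r (by linarith)).le]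
  exact (le_inv_mul_iff₀ hc).mpr (hle r hr)

end Growth

section Integrals

open Asymptotics Filter

variable {f : ℝ → ℝ}

lemma integrableOn_inv_div_log_rpow_Ioi {p c : ℝ} (hp : 1 < p) (hc : 1 < c) :
    IntegrableOn (fun t => t⁻¹ / Real.log t ^ p) (Ioi c) := by
  have hlim : Tendsto (fun t => Real.log t ^ (-(p - 1)) / (1 - p)) atTop (nhds (0 / (1 - p))) :=
    ((tendsto_rpow_neg_atTop (sub_pos.mpr hp)).comp Real.tendsto_log_atTop).div_const _
  refine integrableOn_Ioi_deriv_of_nonneg' (fun t (ht : c ≤ t) => ?_) (fun t (ht : c < t) => ?_)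
    hlim
  · have hlog : 0 < Real.log t := Real.log_pos (by linarith)
    refine (((Real.hasDerivAt_log (by linarith)).rpow_const (Or.inl hlog.ne')).div_const
      (1 - p)).congr_deriv ?_
    have hp' : 1 - p ≠ 0 := by linarith
    rw [show -(p - 1) - 1 = -p by ring, Real.rpow_neg hlog.le]
    field_simp
    ring
  · have hlog : 0 < Real.log t := Real.log_pos (by linarith)
    have ht0 : 0 < t := by linarith
    positivity

lemma integrableOn_div_sq_of_isBigO {a b : ℝ} (hb : 1 / 2 < b) (hf : ContinuousOn f (Ici a))
    (hf0 : ∀ r ≥ a, f r ≠ 0) (hgrowth : (fun r => r * Real.log r ^ b) =O[atTop] f) :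
    IntegrableOn (fun r => r / f r ^ 2) (Ici a) := by
  have hcont : ContinuousOn (fun r => r / f r ^ 2) (Ici a) :=
    continuousOn_id.div (hf.pow 2) fun r hr => pow_ne_zero 2 (hf0 r hr)
  refine (hcont.locallyIntegrableOn measurableSet_Ici).integrableOn_of_isBigO_atTop ?_
    ⟨Ioi 2, Ioi_mem_atTop 2, integrableOn_inv_div_log_rpow_Ioi (p := 2 * b) (by linarith)
      one_lt_two⟩
  have hinv : (fun r => (f r ^ 2)⁻¹) =O[atTop] fun r => ((r * Real.log r ^ b) ^ 2)⁻¹ := by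
    refine (hgrowth.pow 2).inv_rev ?_
    filter_upwards [eventually_gt_atTop 1] with r hr h_zero
    have hlog := Real.log_pos hr
    exact absurd h_zero (by positivity)
  refine ((isBigO_refl (fun r : ℝ => r) atTop).mul hinv).congr' (by simp [div_eq_mul_inv]) ?_
  filter_upwards [eventually_gt_atTop 1] with r hr
  have hlog := Real.log_pos hr
  rw [mul_comm 2 b, Real.rpow_mul hlog.le, Real.rpow_two]
  field_simp

lemma setLIntegral_Ioi_rpow_le {q s : ℝ} (hq : q < -1) (hs : 0 < s) (hfs : 0 < f s)
    (hmono : MonotoneOn (fun r => f r / r) (Ici s)) :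
    ∫⁻ t in Ioi s, ENNReal.ofReal (f t ^ q) ≤ ENNReal.ofReal (s * f s ^ q / -(q + 1)) := by
  have hk : 0 < f s / s := div_pos hfs hs
  calc ∫⁻ t in Ioi s, ENNReal.ofReal (f t ^ q)
      ≤ ∫⁻ t in Ioi s, ENNReal.ofReal ((f s / s) ^ q * t ^ q) := by
        refine setLIntegral_mono' measurableSet_Ioi fun t (ht : s < t) => ?_
        have ht0 : 0 < t := hs.trans ht
        have hlinear : f s / s * t ≤ f t :=
          (le_div_iff₀ ht0).mp (hmono self_mem_Ici ht.le ht.le)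
        rw [← Real.mul_rpow hk.le ht0.le]
        exact ENNReal.ofReal_le_ofReal
          (Real.rpow_le_rpow_of_nonpos (by positivity) hlinear (by linarith))
    _ = ENNReal.ofReal (∫ t in Ioi s, (f s / s) ^ q * t ^ q) := by
        refine (ofReal_integral_eq_lintegral_ofReal
          ((integrableOn_Ioi_rpow_of_lt hq hs).const_mul _) ?_).symm
        filter_upwards [ae_restrict_mem measurableSet_Ioi] with t (ht : s < t)
        have ht0 : 0 < t := hs.trans ht
        positivity
    _ = ENNReal.ofReal (s * f s ^ q / -(q + 1)) := by
        rw [integral_const_mul, integral_Ioi_rpow_of_lt hq hs, Real.div_rpow hfs.le hs.le,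
          Real.rpow_add_one hs.ne']
        have : q + 1 ≠ 0 := by linarith
        field_simp

lemma rpow_mul_setLIntegral_Ioi_rpow_le {p s : ℝ} (hp : 2 < p) (hs : 0 < s) (hfs : 0 < f s)
    (hmono : MonotoneOn (fun r => f r / r) (Ici s)) :
    ENNReal.ofReal (f s ^ (p - 3)) * ∫⁻ t in Ioi s, ENNReal.ofReal (f t ^ (1 - p)) ≤
      ENNReal.ofReal (s / f s ^ 2 / (p - 2)) := by
  calc _ ≤ ENNReal.ofReal (f s ^ (p - 3)) *
        ENNReal.ofReal (s * f s ^ (1 - p) / -(1 - p + 1)) := by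
        gcongr
        exact setLIntegral_Ioi_rpow_le (by linarith) hs hfs hmono
    _ = ENNReal.ofReal (s * (f s ^ (p - 3) * f s ^ (1 - p)) / (p - 2)) := by
        rw [← ENNReal.ofReal_mul (by positivity)]
        ring_nf
    _ = ENNReal.ofReal (s / f s ^ 2 / (p - 2)) := by
        rw [← Real.rpow_add hfs, show p - 3 + (1 - p) = -2 by ring, Real.rpow_neg hfs.le,
          Real.rpow_two, div_eq_mul_inv s]

end Integrals

theorem stmt_0_general {p κ : ℝ} (hp : 2 < p) (hκ : 1 / 2 < κ) {f : ℝ → ℝ} (hf : ContDiff ℝ 2 f)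
    (hf0 : f 0 = 0) (hfpos : ∀ r > 0, 0 < f r) (hfconv : ∀ r > 0, 0 ≤ deriv (deriv f) r)
    (hcurv : ∀ᶠ r in Filter.atTop, κ / (r ^ 2 * Real.log r) * f r ≤ deriv (deriv f) r) :
    (∀ a > 0, (∫⁻ s in Ioi a, ENNReal.ofReal (f s ^ (p - 3)) *
        ∫⁻ t in Ioi s, ENNReal.ofReal (f t ^ (1 - p))) < ⊤) ∧
      ∀ s > 0, (∫⁻ t in Ioi s, ENNReal.ofReal (f t ^ (1 - p))) < ⊤ := by
  have hconvex : ConvexOn ℝ (Ici 0) f :=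
    convexOn_of_deriv2_nonneg (convex_Ici 0) hf.continuous.continuousOn
      (hf.differentiable two_ne_zero).differentiableOn hf.differentiable_deriv_two.differentiableOn
      (fun r hr => hfconv r (by simpa using hr))
  have hmono : ∀ s > 0, MonotoneOn (fun r => f r / r) (Ici s) := fun s hs =>
    (monotoneOn_div_of_convexOn hconvex hf0).mono (Ici_subset_Ioi.mpr hs)
  have hgrowth : (fun r => r * Real.log r ^ min κ 1) =O[Filter.atTop] f := by
    refine mul_log_rpow_isBigO (lt_min (by linarith) one_pos) (min_le_right κ 1) hf hconvex hf0
      hfpos ?_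
    filter_upwards [hcurv, Filter.eventually_gt_atTop 1] with r hr hr1
    have hlog := Real.log_pos hr1
    have hfr := hfpos r (by linarith)
    exact le_trans (by gcongr; exact min_le_left κ 1) hr
  refine ⟨fun a ha => ?_, fun s hs => (setLIntegral_Ioi_rpow_le (by linarith) hs (hfpos s hs)
    (hmono s hs)).trans_lt ENNReal.ofReal_lt_top⟩
  have hint : IntegrableOn (fun s => s / f s ^ 2 / (p - 2)) (Ioi a) :=
    ((integrableOn_div_sq_of_isBigO (lt_min hκ (by norm_num)) hf.continuous.continuousOn
      (fun r hr => (hfpos r (ha.trans_le hr)).ne') hgrowth).mono_set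
        Ioi_subset_Ici_self).div_const _
  exact (setLIntegral_mono' measurableSet_Ioi fun s hs =>
    rpow_mul_setLIntegral_Ioi_rpow_le hp (ha.trans hs) (hfpos s (ha.trans hs))
      (hmono s (ha.trans hs))).trans_lt hint.lintegral_lt_top

/-- For a warping function `f` (C², f(0)=0, f'(0)=1, f>0 and f''≥0 on (0,∞))
satisfying the curvature bound `f''(r) ≥ ((1/2+ε)/(r² log r)) f(r)` for `r ≥ r₀ > e`,
the integral `∫₁^∞ f(s)^{n-3} (∫ₛ^∞ f(t)^{1-n} dt) ds` is finite; in particular every inner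
integral is finite. -/
theorem stmt_0 (n : ℕ) (hn : 3 ≤ n) (ε r₀ : ℝ) (hε : 0 < ε) (hr₀ : Real.exp 1 < r₀)
    (f : ℝ → ℝ) (hf : ContDiff ℝ 2 f) (hf0 : f 0 = 0) (hf'0 : deriv f 0 = 1)
    (hfpos : ∀ r > (0:ℝ), 0 < f r) (hfconv : ∀ r > (0:ℝ), 0 ≤ deriv (deriv f) r)
    (hcurv : ∀ r ≥ r₀, ((1/2 + ε) / (r ^ 2 * Real.log r)) * f r ≤ deriv (deriv f) r) :
    (∫⁻ s in Ioi (1:ℝ),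
        ENNReal.ofReal (f s ^ ((n : ℝ) - 3)) *
          ∫⁻ t in Ioi s, ENNReal.ofReal (f t ^ (1 - (n : ℝ)))) < ⊤ ∧
      ∀ s ≥ (1:ℝ), (∫⁻ t in Ioi s, ENNReal.ofReal (f t ^ (1 - (n : ℝ)))) < ⊤ := by
  have hcurv' : ∀ᶠ r in Filter.atTop,
      (1 / 2 + ε) / (r ^ 2 * Real.log r) * f r ≤ deriv (deriv f) r := by
    filter_upwards [Filter.eventually_ge_atTop r₀] using hcurv
  have hn' : (2 : ℝ) < n := by exact_mod_cast hn
  obtain ⟨outer, inner⟩ :=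
    stmt_0_general hn' (by linarith) hf hf0 hfpos hfconv hcurv'
  exact ⟨outer 1 one_pos, fun s hs => inner s (one_pos.trans_le hs)⟩
end

section
/- Let n ≥ 2 be an integer, k > 0, and let f : ℝ → ℝ be C¹ with f(t) > 0 and f'(t) ≥ 0 for all t ≥ 1. Assume ∫₁^∞ f(t)^{1−n} (∫₁^t f(s)^{n−3} ds) dt < ∞, and define η(r) = k ∫_r^∞ f(t)^{1−n} (∫₁^t f(s)^{n−3} ds) dt for r ≥ 1. Then for every r > 1, η''(r) (1 + η'(r)²)^{−3/2} + (n−1) (f'(r)/f(r)) η'(r) (1 + η'(r)²)^{−1/2} ≤ 0. -/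
open MeasureTheory Set

/-!
By construction `f ^ (n - 1) * η'` is `-k` times a nondecreasing function of `r` which starts from
zero, so `η' ≤ 0` and the radial Laplacian `Δη = f ^ (1 - n) * (f ^ (n - 1) * η')'` is nonpositive.
Factoring `(1 + η' ^ 2) ^ (-3 / 2)` out of the minimal graph operator leaves
`Δη + (n - 1) * (f' / f) * η' ^ 3`, and both terms are nonpositive when `f' ≥ 0`.
-/

section FundThmCalculus

variable {E : Type*} [NormedAddCommGroup E] [NormedSpace ℝ E] [CompleteSpace E]
  {g : ℝ → E} {a b x : ℝ}

theorem hasDerivAt_setIntegral_Ioc (hg : IntegrableOn g (Ioc a b)) (hx : x ∈ Ioo a b)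
    (hgx : ContinuousAt g x) : HasDerivAt (fun t ↦ ∫ s in Ioc a t, g s) (g x) x := by
  have hgi : IntervalIntegrable g volume a x :=
    (intervalIntegrable_iff_integrableOn_Ioc_of_le hx.1.le).2
      (hg.mono_set (Ioc_subset_Ioc_right hx.2.le))
  have hmeas : StronglyMeasurableAtFilter g (nhds x) :=
    ⟨Ioc a b, Ioc_mem_nhds hx.1 hx.2, hg.aestronglyMeasurable⟩
  refine (intervalIntegral.integral_hasDerivAt_right hgi hmeas hgx).congr_of_eventuallyEq ?_
  filter_upwards [Ioi_mem_nhds hx.1] with t ht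
  exact (intervalIntegral.integral_of_le ht.le).symm

theorem hasDerivAt_setIntegral_Ioi (hg : IntegrableOn g (Ioi a)) (hx : a < x)
    (hgx : ContinuousAt g x) : HasDerivAt (fun t ↦ ∫ s in Ioi t, g s) (-g x) x := by
  have hIoc : HasDerivAt (fun t ↦ ∫ s in Ioc a t, g s) (g x) x :=
    hasDerivAt_setIntegral_Ioc (hg.mono_set Ioc_subset_Ioi_self) ⟨hx, lt_add_one x⟩ hgx
  refine (hIoc.const_sub (∫ s in Ioi a, g s)).congr_of_eventuallyEq ?_
  filter_upwards [Ioi_mem_nhds hx] with t ht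
  rw [← intervalIntegral.integral_of_le ht.le,
    ← intervalIntegral.integral_Ioi_sub_Ioi hg ht.le, sub_sub_cancel]

end FundThmCalculus

section RadialOperators

variable {n r : ℝ} {f η : ℝ → ℝ}

/-- The Laplace–Beltrami operator of the warped metric `dr² + f(r)² dθ²` in dimension `n`, applied
to the radial function `η`. The dimension is a real parameter. -/
noncomputable def radialLaplacian (n : ℝ) (f η : ℝ → ℝ) (r : ℝ) : ℝ :=
  deriv (deriv η) r + (n - 1) * (deriv f r / f r) * deriv η r

/-- The minimal graph operator `div (∇u / √(1 + |∇u|²))` of the warped metric `dr² + f(r)² dθ²` in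
dimension `n`, applied to the radial function `η`. The dimension is a real parameter. -/
noncomputable def radialMinimalGraphOperator (n : ℝ) (f η : ℝ → ℝ) (r : ℝ) : ℝ :=
  deriv (deriv η) r * (1 + deriv η r ^ 2) ^ (-(3 : ℝ) / 2) +
    (n - 1) * (deriv f r / f r) * deriv η r * (1 + deriv η r ^ 2) ^ (-(1 : ℝ) / 2)

theorem radialMinimalGraphOperator_eq :
    radialMinimalGraphOperator n f η r = (1 + deriv η r ^ 2) ^ (-(3 : ℝ) / 2) *
      (radialLaplacian n f η r + (n - 1) * (deriv f r / f r) * deriv η r ^ 3) := by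
  have hpos : 0 < 1 + deriv η r ^ 2 := by positivity
  have hpow : (1 + deriv η r ^ 2) ^ (-(1 : ℝ) / 2) =
      (1 + deriv η r ^ 2) ^ (-(3 : ℝ) / 2) * (1 + deriv η r ^ 2) := by
    rw [← Real.rpow_add_one hpos.ne']
    norm_num
  rw [radialMinimalGraphOperator, radialLaplacian, hpow]
  ring

theorem radialMinimalGraphOperator_nonpos (hn : 1 ≤ n) (hf : 0 ≤ deriv f r / f r)
    (hη : deriv η r ≤ 0) (hΔ : radialLaplacian n f η r ≤ 0) :
    radialMinimalGraphOperator n f η r ≤ 0 := by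
  have hcubic : (n - 1) * (deriv f r / f r) * deriv η r ^ 3 ≤ 0 :=
    mul_nonpos_of_nonneg_of_nonpos (mul_nonneg (sub_nonneg.2 hn) hf)
      (Odd.pow_nonpos (by decide) hη)
  rw [radialMinimalGraphOperator_eq]
  exact mul_nonpos_of_nonneg_of_nonpos (by positivity) (add_nonpos hΔ hcubic)

theorem radialLaplacian_eq_of_deriv_eventuallyEq {J : ℝ → ℝ} {J' : ℝ}
    (hf : DifferentiableAt ℝ f r) (hfr : f r ≠ 0) (hJ : HasDerivAt J J' r)
    (hη : deriv η =ᶠ[nhds r] fun t ↦ f t ^ (1 - n) * J t) :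
    radialLaplacian n f η r = f r ^ (1 - n) * J' := by
  have hη' : deriv (deriv η) r =
      deriv f r * (1 - n) * f r ^ (1 - n - 1) * J r + f r ^ (1 - n) * J' :=
    (((hf.hasDerivAt.rpow_const (Or.inl hfr)).mul hJ).congr_of_eventuallyEq hη).deriv
  rw [radialLaplacian, hη', hη.eq_of_nhds, Real.rpow_sub_one hfr]
  ring

end RadialOperators

section Barrier

variable {n k a r : ℝ} {f w η : ℝ → ℝ}

/-- The function `t ↦ f(t)^{1-n} ∫_a^t w`, whose tail integrals, multiplied by `k`, are the radial
barrier. The paper takes `a = 1` and `w = f^{n-3}`. -/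
noncomputable def barrierDensity (n : ℝ) (f w : ℝ → ℝ) (a t : ℝ) : ℝ :=
  f t ^ (1 - n) * ∫ s in Ioc a t, w s

theorem hasDerivAt_setIntegral_Ioc_of_continuousOn (hw : ContinuousOn w (Ici a)) (hr : a < r) :
    HasDerivAt (fun t ↦ ∫ s in Ioc a t, w s) (w r) r :=
  hasDerivAt_setIntegral_Ioc
    ((hw.mono Icc_subset_Ici_self).integrableOn_Icc.mono_set Ioc_subset_Icc_self)
    ⟨hr, lt_add_one r⟩ (hw.continuousAt (Ici_mem_nhds hr))

theorem continuousOn_barrierDensity (hf : ContinuousOn f (Ioi a)) (hf0 : ∀ t > a, f t ≠ 0)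
    (hw : ContinuousOn w (Ici a)) : ContinuousOn (barrierDensity n f w a) (Ioi a) :=
  (hf.rpow_const fun t ht ↦ Or.inl (hf0 t ht)).mul fun _ ht ↦
    (hasDerivAt_setIntegral_Ioc_of_continuousOn hw ht).continuousAt.continuousWithinAt

theorem deriv_eq_of_eq_integral_barrierDensity (hf : ContinuousOn f (Ioi a))
    (hf0 : ∀ t > a, f t ≠ 0) (hw : ContinuousOn w (Ici a))
    (hint : IntegrableOn (barrierDensity n f w a) (Ioi a))
    (hη : ∀ t > a, η t = k * ∫ s in Ioi t, barrierDensity n f w a s) (hr : a < r) :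
    deriv η r = f r ^ (1 - n) * (-k * ∫ s in Ioc a r, w s) := by
  have hcont : ContinuousAt (barrierDensity n f w a) r :=
    (continuousOn_barrierDensity hf hf0 hw).continuousAt (Ioi_mem_nhds hr)
  have hderiv : HasDerivAt η (k * -barrierDensity n f w a r) r :=
    ((hasDerivAt_setIntegral_Ioi hint hr hcont).const_mul k).congr_of_eventuallyEq
      (Filter.eventually_of_mem (Ioi_mem_nhds hr) hη)
  rw [hderiv.deriv, barrierDensity]
  ring

theorem stmt_6_general (hn : 1 ≤ n) (hk : 0 ≤ k) (hf : ContinuousOn f (Ioi a))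
    (hfpos : ∀ t > a, 0 < f t) (hw : ContinuousOn w (Ici a)) (hw0 : ∀ t > a, 0 ≤ w t)
    (hint : IntegrableOn (barrierDensity n f w a) (Ioi a))
    (hη : ∀ t > a, η t = k * ∫ s in Ioi t, barrierDensity n f w a s)
    (hr : a < r) (hfr : DifferentiableAt ℝ f r) (hf' : 0 ≤ deriv f r) :
    radialMinimalGraphOperator n f η r ≤ 0 := by
  have hderiv (t : ℝ) (ht : a < t) : deriv η t = f t ^ (1 - n) * (-k * ∫ s in Ioc a t, w s) :=
    deriv_eq_of_eq_integral_barrierDensity hf (fun t ht ↦ (hfpos t ht).ne') hw hint hη ht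
  have hΔ : radialLaplacian n f η r = f r ^ (1 - n) * (-k * w r) :=
    radialLaplacian_eq_of_deriv_eventuallyEq hfr (hfpos r hr).ne'
      ((hasDerivAt_setIntegral_Ioc_of_continuousOn hw hr).const_mul (-k))
      (Filter.eventually_of_mem (Ioi_mem_nhds hr) hderiv)
  have hpow : 0 ≤ f r ^ (1 - n) := Real.rpow_nonneg (hfpos r hr).le _
  have hk' : -k ≤ 0 := neg_nonpos.2 hk
  have hJ : 0 ≤ ∫ s in Ioc a r, w s :=
    setIntegral_nonneg measurableSet_Ioc fun s hs ↦ hw0 s hs.1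
  refine radialMinimalGraphOperator_nonpos hn (div_nonneg hf' (hfpos r hr).le) ?_ ?_
  · rw [hderiv r hr]
    exact mul_nonpos_of_nonneg_of_nonpos hpow (mul_nonpos_of_nonpos_of_nonneg hk' hJ)
  · rw [hΔ]
    exact mul_nonpos_of_nonneg_of_nonpos hpow (mul_nonpos_of_nonpos_of_nonneg hk' (hw0 r hr))

end Barrier

/-- Under the hypotheses of Statement 4 with moreover `f' ≥ 0` on `[1,∞)`,
the barrier `η` is a radial supersolution of the minimal graph equation:
`η''(1+η'²)^{-3/2} + (n-1)(f'/f) η' (1+η'²)^{-1/2} ≤ 0` for every `r > 1`. -/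
theorem stmt_6 (n : ℕ) (hn : 2 ≤ n) (k : ℝ) (hk : 0 < k)
    (f : ℝ → ℝ) (hf : ContDiff ℝ 1 f)
    (hfpos : ∀ t ≥ (1:ℝ), 0 < f t) (hf' : ∀ t ≥ (1:ℝ), 0 ≤ deriv f t)
    (hint : IntegrableOn
      (fun t => f t ^ (1 - (n : ℝ)) * ∫ s in Ioc (1:ℝ) t, f s ^ ((n : ℝ) - 3))
      (Ioi (1:ℝ)))
    (η : ℝ → ℝ)
    (hη : ∀ r ≥ (1:ℝ), η r =
      k * ∫ t in Ioi r, f t ^ (1 - (n : ℝ)) * ∫ s in Ioc (1:ℝ) t, f s ^ ((n : ℝ) - 3)) :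
    ∀ r > (1:ℝ),
      deriv (deriv η) r * (1 + deriv η r ^ 2) ^ (-(3:ℝ)/2) +
        ((n : ℝ) - 1) * (deriv f r / f r) * deriv η r * (1 + deriv η r ^ 2) ^ (-(1:ℝ)/2)
        ≤ 0 := by
  have hpow : ContinuousOn (fun s ↦ f s ^ ((n : ℝ) - 3)) (Ici 1) :=
    hf.continuous.continuousOn.rpow_const fun s hs ↦ Or.inl (hfpos s hs).ne'
  exact fun r hr ↦ stmt_6_general (Nat.one_le_cast.2 (one_le_two.trans hn)) hk.le
    hf.continuous.continuousOn (fun t ht ↦ hfpos t ht.le) hpow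
    (fun t ht ↦ Real.rpow_nonneg (hfpos t ht.le).le _) hint (fun t ht ↦ hη t ht.le) hr
    (hf.differentiable one_ne_zero r) (hf' r hr.le)
end

section
/- Let α > 2, u > 0, R > 0, g ≥ 0 and 0 ≤ d ≤ R be real numbers, and set W = √(1 + g²). If W > α/√(α² − 4) and W > 8αu/R, then (g/(4uW) − 2d/(R²W))² > 1/(16 u² α²). -/
/-!
The first bound on `W = √(1 + ‖v‖²)` says exactly that `‖v‖ / W` exceeds `2 / α`, so the gradient
term `v / (4uW)` has norm above `2 · 1 / (4uα)`. The second bound on `W` makes the norm of the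
cutoff term `2w / (R²W)` smaller than `1 / (4uα)`, and the reverse triangle inequality leaves a
difference of norm above `1 / (4uα)`.
-/

theorem div_lt_div_sqrt_one_add_sq {a c x : ℝ} (hc : 0 ≤ c) (hca : c < a) (hx : 0 ≤ x)
    (h : a / √(a ^ 2 - c ^ 2) < √(1 + x ^ 2)) : c / a < x / √(1 + x ^ 2) := by
  have ha : 0 < a := hc.trans_lt hca
  have hdiff : 0 < a ^ 2 - c ^ 2 := sub_pos.2 (pow_lt_pow_left₀ hca hc two_ne_zero)
  have hsum : 0 < 1 + x ^ 2 := by positivity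
  have hsq : a ^ 2 < (1 + x ^ 2) * (a ^ 2 - c ^ 2) := by
    rwa [div_lt_iff₀ (Real.sqrt_pos.2 hdiff), ← Real.sqrt_mul hsum.le,
      Real.lt_sqrt ha.le] at h
  have hratio : (c / a) ^ 2 < (x / √(1 + x ^ 2)) ^ 2 := by
    rw [div_pow, div_pow, Real.sq_sqrt hsum.le, div_lt_div_iff₀ (by positivity) hsum]
    linarith
  exact lt_of_pow_lt_pow_left₀ 2 (by positivity) hratio

theorem div_sq_mul_lt_inv {c d R W : ℝ} (hc : 0 < c) (hR : 0 < R) (hdR : d ≤ R)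
    (h : c / R < W) : d / (R ^ 2 * W) < c⁻¹ := by
  have hW : 0 < W := (div_pos hc hR).trans h
  calc
    d / (R ^ 2 * W) ≤ R / (R ^ 2 * W) := by gcongr
    _ = (W * R)⁻¹ := by field_simp
    _ < c⁻¹ := inv_strictAnti₀ hc ((div_lt_iff₀ hR).1 h)

theorem stmt_8_general {E : Type*} [SeminormedAddCommGroup E] [NormedSpace ℝ E]
    (α u R W : ℝ) (v w : E) (hα : 2 < α) (hu : 0 < u) (hR : 0 < R) (hwR : ‖w‖ ≤ R)
    (hW : W = √(1 + ‖v‖ ^ 2)) (hW1 : α / √(α ^ 2 - 4) < W) (hW2 : 8 * α * u / R < W) :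
    1 / (16 * u ^ 2 * α ^ 2) < ‖(1 / (4 * u * W)) • v - (2 / (R ^ 2 * W)) • w‖ ^ 2 := by
  have : 0 < α := two_pos.trans hα
  have hW0 : 0 < W := hW ▸ Real.sqrt_pos.2 (by positivity)
  have hslope : 2 / α < ‖v‖ / W := by
    subst hW
    exact div_lt_div_sqrt_one_add_sq zero_le_two hα (norm_nonneg v) (by norm_num1; exact hW1)
  have hv : 2 * (1 / (4 * u * α)) < ‖(1 / (4 * u * W)) • v‖ := calc
    2 * (1 / (4 * u * α)) = 1 / (4 * u) * (2 / α) := by ring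
    _ < 1 / (4 * u) * (‖v‖ / W) := by gcongr
    _ = ‖(1 / (4 * u * W)) • v‖ := by
      rw [norm_smul, Real.norm_of_nonneg (by positivity)]
      ring
  have hw : ‖(2 / (R ^ 2 * W)) • w‖ < 1 / (4 * u * α) := calc
    ‖(2 / (R ^ 2 * W)) • w‖ = 2 * (‖w‖ / (R ^ 2 * W)) := by
      rw [norm_smul, Real.norm_of_nonneg (by positivity)]
      ring
    _ < 2 * (8 * α * u)⁻¹ := by
      gcongr
      exact div_sq_mul_lt_inv (by positivity) hR hwR hW2
    _ = 1 / (4 * u * α) := by ring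
  have hsub := norm_sub_norm_le ((1 / (4 * u * W)) • v) ((2 / (R ^ 2 * W)) • w)
  calc
    1 / (16 * u ^ 2 * α ^ 2) = (1 / (4 * u * α)) ^ 2 := by ring
    _ < ‖(1 / (4 * u * W)) • v - (2 / (R ^ 2 * W)) • w‖ ^ 2 := by
      gcongr
      linarith

/-- the elementary algebraic inequality behind the interior gradient estimate
(Proposition 3.1): if `W = √(1+g²)` satisfies `W > α/√(α²-4)` and `W > 8αu/R`, then
`(g/(4uW) - 2d/(R²W))² > 1/(16u²α²)`. -/
theorem stmt_8 (α u R g d W : ℝ) (hα : 2 < α) (hu : 0 < u) (hR : 0 < R)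
    (hg : 0 ≤ g) (hd0 : 0 ≤ d) (hdR : d ≤ R)
    (hW : W = Real.sqrt (1 + g ^ 2))
    (hW1 : α / Real.sqrt (α ^ 2 - 4) < W) (hW2 : 8 * α * u / R < W) :
    1 / (16 * u ^ 2 * α ^ 2) < (g / (4 * u * W) - 2 * d / (R ^ 2 * W)) ^ 2 := by
  simpa only [smul_eq_mul, div_mul_eq_mul_div, one_mul, Real.norm_eq_abs, sq_abs] using
    stmt_8_general α u R W g d hα hu hR (abs_le.2 ⟨by linarith, hdR⟩) (by simpa using hW) hW1 hW2
end

section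
/- Let α < −1 be real, set β = −2 − α, let c > 0 be real, and define φ(r) = r (log r)^{c} for r > 1. Then ∫₂^∞ φ(s)^{β} (∫_s^∞ φ(t)^{α} dt) ds < ∞ if and only if c > 1/2. -/
open MeasureTheory Set

/-!
Since `log` varies slowly, Potter's bounds let `(log t) ^ p` be traded for `(log s) ^ p` at the
price of an arbitrarily small power of `t / s`. Hence, for `α < -1`, the inner integral
`∫ₛ^∞ t ^ α (log t) ^ p dt` is comparable to `s ^ (α + 1) (log s) ^ p`, as if the logarithm were
constant. With `α + β = -2` the outer integrand is then comparable to `s⁻¹ (log s) ^ (-2c)`, and the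
substitution `u = log s` finishes.
-/

section PotterBounds

variable {a s t δ : ℝ}

lemma log_le_mul_div_rpow_mul_log (hδ : 0 < δ) (ha : 1 < a) (has : a ≤ s) (hst : s ≤ t) :
    Real.log t ≤ (1 + 1 / (δ * Real.log a)) * (t / s) ^ δ * Real.log s := by
  have hs : 0 < s := by linarith
  have hloga : 0 < Real.log a := Real.log_pos ha
  have hlog : Real.log a ≤ Real.log s := Real.log_le_log (by linarith) has
  have hratio : 1 ≤ t / s := (one_le_div hs).2 hst
  have hpow : 1 ≤ (t / s) ^ δ := Real.one_le_rpow hratio hδ.le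
  calc Real.log t = 1 * Real.log s + Real.log (t / s) * 1 := by
        rw [Real.log_div (by linarith) hs.ne']; ring
    _ ≤ (t / s) ^ δ * Real.log s + (t / s) ^ δ / δ * (Real.log s / Real.log a) := by
        gcongr
        · exact hloga.le.trans hlog
        · exact Real.log_le_rpow_div (by linarith) hδ
        · exact (one_le_div hloga).2 hlog
    _ = (1 + 1 / (δ * Real.log a)) * (t / s) ^ δ * Real.log s := by
        field_simp

lemma exists_log_rpow_le_mul_div_rpow (p : ℝ) (hδ : 0 < δ) (ha : 1 < a) :
    ∃ C : ℝ, 0 < C ∧ ∀ s t, a ≤ s → s ≤ t →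
      Real.log t ^ p ≤ C * (t / s) ^ δ * Real.log s ^ p := by
  have log_pos_of_le {s : ℝ} (has : a ≤ s) : 0 < Real.log s := Real.log_pos (by linarith)
  rcases le_or_gt p 0 with hp | hp
  · refine ⟨1, one_pos, fun s t has hst ↦ ?_⟩
    have hs : 0 < s := by linarith
    have hlog : 0 < Real.log s := log_pos_of_le has
    calc Real.log t ^ p ≤ Real.log s ^ p :=
          Real.rpow_le_rpow_of_nonpos hlog (Real.log_le_log hs hst) hp
      _ ≤ 1 * (t / s) ^ δ * Real.log s ^ p := by
          rw [one_mul]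
          exact le_mul_of_one_le_left (by positivity)
            (Real.one_le_rpow ((one_le_div hs).2 hst) hδ.le)
  · have hloga : 0 < Real.log a := Real.log_pos ha
    refine ⟨(1 + 1 / (δ / p * Real.log a)) ^ p, by positivity, fun s t has hst ↦ ?_⟩
    have hratio : 0 ≤ t / s := div_nonneg (by linarith) (by linarith)
    have hlog : 0 < Real.log s := log_pos_of_le has
    calc Real.log t ^ p
        ≤ ((1 + 1 / (δ / p * Real.log a)) * (t / s) ^ (δ / p) * Real.log s) ^ p :=
          Real.rpow_le_rpow (log_pos_of_le (has.trans hst)).le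
            (log_le_mul_div_rpow_mul_log (div_pos hδ hp) ha has hst) hp.le
      _ = (1 + 1 / (δ / p * Real.log a)) ^ p * (t / s) ^ δ * Real.log s ^ p := by
          rw [Real.mul_rpow (by positivity) hlog.le, Real.mul_rpow (by positivity) (by positivity),
            ← Real.rpow_mul hratio, div_mul_cancel₀ δ hp.ne']

lemma exists_div_rpow_neg_mul_log_rpow_le (p : ℝ) (hδ : 0 < δ) (ha : 1 < a) :
    ∃ C : ℝ, 0 < C ∧ ∀ s t, a ≤ s → s ≤ t →
      (t / s) ^ (-δ) * Real.log s ^ p ≤ C * Real.log t ^ p := by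
  obtain ⟨C, hC, hle⟩ := exists_log_rpow_le_mul_div_rpow (-p) hδ ha
  refine ⟨C, hC, fun s t has hst ↦ ?_⟩
  have hlogs : 0 < Real.log s := Real.log_pos (by linarith)
  have hlogt : 0 < Real.log t := Real.log_pos (by linarith)
  have hratio : 0 < t / s := div_pos (by linarith) (by linarith)
  have hinv := hle s t has hst
  rw [Real.rpow_neg hlogs.le, Real.rpow_neg hlogt.le] at hinv
  rw [Real.rpow_neg hratio.le]
  field_simp at hinv ⊢
  linarith

end PotterBounds

section TailIntegral

variable {a α s δ : ℝ}

lemma lintegral_Ioi_rpow_mul_div_rpow (hαδ : α + δ < -1) (hs : 0 < s) :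
    ∫⁻ t in Ioi s, ENNReal.ofReal (t ^ α * (t / s) ^ δ) =
      ENNReal.ofReal (-1 / (α + δ + 1) * s ^ (α + 1)) := by
  have hsplit : ∀ t ∈ Ioi s, t ^ α * (t / s) ^ δ = s ^ (-δ) * t ^ (α + δ) := fun t ht ↦ by
    have ht0 : 0 < t := hs.trans ht
    rw [Real.div_rpow ht0.le hs.le, Real.rpow_add ht0, Real.rpow_neg hs.le]
    ring
  have hint : IntegrableOn (fun t ↦ t ^ α * (t / s) ^ δ) (Ioi s) :=
    IntegrableOn.congr_fun ((integrableOn_Ioi_rpow_of_lt hαδ hs).const_mul (s ^ (-δ)))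
      (fun t ht ↦ (hsplit t ht).symm) measurableSet_Ioi
  have hnonneg : 0 ≤ᵐ[volume.restrict (Ioi s)] fun t ↦ t ^ α * (t / s) ^ δ := by
    filter_upwards [ae_restrict_mem measurableSet_Ioi] with t ht
    have ht0 : 0 < t := hs.trans ht
    simp only [Pi.zero_apply]
    positivity
  have hpow : s ^ (α + 1) = s ^ (-δ) * s ^ (α + δ + 1) := by
    rw [← Real.rpow_add hs]
    congr 1
    ring
  rw [← ofReal_integral_eq_lintegral_ofReal hint hnonneg,
    setIntegral_congr_fun measurableSet_Ioi hsplit, integral_const_mul,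
    integral_Ioi_rpow_of_lt hαδ hs, hpow]
  congr 1
  ring

lemma exists_lintegral_Ioi_rpow_mul_log_rpow_le (p : ℝ) (ha : 1 < a) (hα : α < -1) :
    ∃ C : ENNReal, C ≠ ⊤ ∧ ∀ s, a ≤ s →
      ∫⁻ t in Ioi s, ENNReal.ofReal (t ^ α * Real.log t ^ p) ≤
        C * ENNReal.ofReal (s ^ (α + 1) * Real.log s ^ p) := by
  obtain ⟨δ, hδ, hαδ⟩ : ∃ δ, 0 < δ ∧ α + δ < -1 :=
    ⟨(-1 - α) / 2, by linarith, by linarith⟩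
  obtain ⟨C, hC, hle⟩ := exists_log_rpow_le_mul_div_rpow p hδ ha
  have hden : 0 < -1 / (α + δ + 1) := div_pos_of_neg_of_neg (by norm_num) (by linarith)
  refine ⟨ENNReal.ofReal (C * (-1 / (α + δ + 1))), ENNReal.ofReal_ne_top, fun s has ↦ ?_⟩
  have hs : 0 < s := by linarith
  have hlog : 0 < Real.log s := Real.log_pos (by linarith)
  calc ∫⁻ t in Ioi s, ENNReal.ofReal (t ^ α * Real.log t ^ p)
      ≤ ∫⁻ t in Ioi s,
          ENNReal.ofReal (C * Real.log s ^ p) * ENNReal.ofReal (t ^ α * (t / s) ^ δ) := by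
        refine setLIntegral_mono' measurableSet_Ioi fun t ht ↦ ?_
        have ht0 : 0 < t := hs.trans ht
        rw [← ENNReal.ofReal_mul (by positivity)]
        refine ENNReal.ofReal_le_ofReal ?_
        calc t ^ α * Real.log t ^ p ≤ t ^ α * (C * (t / s) ^ δ * Real.log s ^ p) := by
              gcongr
              exact hle s t has (le_of_lt ht)
          _ = C * Real.log s ^ p * (t ^ α * (t / s) ^ δ) := by ring
    _ = ENNReal.ofReal (C * (-1 / (α + δ + 1))) *
          ENNReal.ofReal (s ^ (α + 1) * Real.log s ^ p) := by
        rw [lintegral_const_mul' _ _ ENNReal.ofReal_ne_top, lintegral_Ioi_rpow_mul_div_rpow hαδ hs,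
          ← ENNReal.ofReal_mul (by positivity), ← ENNReal.ofReal_mul (by positivity)]
        congr 1
        ring

lemma exists_rpow_mul_log_rpow_le_lintegral_Ioi (p : ℝ) (ha : 1 < a) (hα : α < -1) :
    ∃ C : ENNReal, C ≠ ⊤ ∧ ∀ s, a ≤ s →
      ENNReal.ofReal (s ^ (α + 1) * Real.log s ^ p) ≤
        C * ∫⁻ t in Ioi s, ENNReal.ofReal (t ^ α * Real.log t ^ p) := by
  obtain ⟨C, hC, hle⟩ := exists_div_rpow_neg_mul_log_rpow_le p one_pos ha
  refine ⟨ENNReal.ofReal (-α * C), ENNReal.ofReal_ne_top, fun s has ↦ ?_⟩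
  have hs : 0 < s := by linarith
  have hlog : 0 < Real.log s := Real.log_pos (by linarith)
  have hα0 : α ≠ 0 := by linarith
  have hnegα : 0 < -α := by linarith
  calc ENNReal.ofReal (s ^ (α + 1) * Real.log s ^ p)
      = ∫⁻ t in Ioi s,
          ENNReal.ofReal (-α * Real.log s ^ p) * ENNReal.ofReal (t ^ α * (t / s) ^ (-1 : ℝ)) := by
        rw [lintegral_const_mul' _ _ ENNReal.ofReal_ne_top,
          lintegral_Ioi_rpow_mul_div_rpow (by linarith) hs, ← ENNReal.ofReal_mul (by positivity)]
        congr 1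
        rw [neg_add_cancel_right]
        field_simp
    _ ≤ ∫⁻ t in Ioi s,
          ENNReal.ofReal (-α * C) * ENNReal.ofReal (t ^ α * Real.log t ^ p) := by
        refine setLIntegral_mono' measurableSet_Ioi fun t ht ↦ ?_
        have ht0 : 0 < t := hs.trans ht
        rw [← ENNReal.ofReal_mul (by positivity), ← ENNReal.ofReal_mul (by positivity)]
        refine ENNReal.ofReal_le_ofReal ?_
        calc -α * Real.log s ^ p * (t ^ α * (t / s) ^ (-1 : ℝ))
            = -α * t ^ α * ((t / s) ^ (-1 : ℝ) * Real.log s ^ p) := by ring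
          _ ≤ -α * t ^ α * (C * Real.log t ^ p) :=
              mul_le_mul_of_nonneg_left (hle s t has (le_of_lt ht)) (by positivity)
          _ = -α * C * (t ^ α * Real.log t ^ p) := by ring
    _ = ENNReal.ofReal (-α * C) * ∫⁻ t in Ioi s, ENNReal.ofReal (t ^ α * Real.log t ^ p) :=
        lintegral_const_mul' _ _ ENNReal.ofReal_ne_top

end TailIntegral

lemma setLIntegral_lt_top_of_le_const_mul {X : Type*} [MeasurableSpace X] {μ : Measure X}
    {A : Set X} (hA : MeasurableSet A) {f g : X → ENNReal} {C : ENNReal} (hC : C ≠ ⊤)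
    (hle : ∀ x ∈ A, f x ≤ C * g x) (hg : ∫⁻ x in A, g x ∂μ < ⊤) : ∫⁻ x in A, f x ∂μ < ⊤ :=
  calc ∫⁻ x in A, f x ∂μ ≤ ∫⁻ x in A, C * g x ∂μ := setLIntegral_mono' hA hle
    _ = C * ∫⁻ x in A, g x ∂μ := lintegral_const_mul' _ _ hC
    _ < ⊤ := ENNReal.mul_lt_top hC.lt_top hg

lemma lintegral_mul_lintegral_Ioi_rpow_mul_log_rpow_lt_top_iff {a α : ℝ} (β p q : ℝ)
    (ha : 1 < a) (hα : α < -1) :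
    (∫⁻ s in Ioi a, ENNReal.ofReal (s ^ β * Real.log s ^ q) *
        ∫⁻ t in Ioi s, ENNReal.ofReal (t ^ α * Real.log t ^ p)) < ⊤ ↔
      ∫⁻ s in Ioi a, ENNReal.ofReal (s ^ (α + β + 1) * Real.log s ^ (p + q)) < ⊤ := by
  have hmul : ∀ s ∈ Ioi a, ENNReal.ofReal (s ^ (α + β + 1) * Real.log s ^ (p + q)) =
      ENNReal.ofReal (s ^ β * Real.log s ^ q) *
        ENNReal.ofReal (s ^ (α + 1) * Real.log s ^ p) := fun s hs ↦ by
    have hs1 : 1 < s := ha.trans hs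
    have hs0 : 0 < s := one_pos.trans hs1
    have hlog : 0 < Real.log s := Real.log_pos hs1
    rw [← ENNReal.ofReal_mul (by positivity), show α + β + 1 = β + (α + 1) by ring,
      Real.rpow_add hs0, Real.rpow_add hlog]
    congr 1
    ring
  constructor
  · obtain ⟨C, hC, hle⟩ := exists_rpow_mul_log_rpow_le_lintegral_Ioi p ha hα
    refine setLIntegral_lt_top_of_le_const_mul measurableSet_Ioi hC fun s hs ↦ ?_
    rw [hmul s hs, mul_left_comm]
    gcongr
    exact hle s (le_of_lt hs)
  · obtain ⟨C, hC, hle⟩ := exists_lintegral_Ioi_rpow_mul_log_rpow_le p ha hα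
    refine setLIntegral_lt_top_of_le_const_mul measurableSet_Ioi hC fun s hs ↦ ?_
    rw [hmul s hs, mul_left_comm]
    gcongr
    exact hle s (le_of_lt hs)

lemma lintegral_Ioi_rpow_lt_top_iff {b : ℝ} (r : ℝ) (hb : 0 < b) :
    ∫⁻ u in Ioi b, ENNReal.ofReal (u ^ r) < ⊤ ↔ r < -1 := by
  have hnonneg : 0 ≤ᵐ[volume.restrict (Ioi b)] fun u ↦ u ^ r := by
    filter_upwards [ae_restrict_mem measurableSet_Ioi] with u hu
    exact Real.rpow_nonneg (hb.trans hu).le r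
  rw [lt_top_iff_ne_top, lintegral_ofReal_ne_top_iff_integrable (by fun_prop) hnonneg]
  exact integrableOn_Ioi_rpow_iff hb

lemma lintegral_Ioi_inv_mul_log_rpow_lt_top_iff {a : ℝ} (r : ℝ) (ha : 1 < a) :
    ∫⁻ s in Ioi a, ENNReal.ofReal (s⁻¹ * Real.log s ^ r) < ⊤ ↔ r < -1 := by
  have ha0 : 0 < a := one_pos.trans ha
  have hderiv : ∀ s ∈ Ioi a, HasDerivWithinAt Real.log s⁻¹ (Ioi a) s := fun s hs ↦
    (Real.hasDerivAt_log (ha0.trans hs).ne').hasDerivWithinAt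
  have hmono : MonotoneOn Real.log (Ioi a) :=
    Real.strictMonoOn_log.monotoneOn.mono fun s hs ↦ ha0.trans hs
  rw [← lintegral_Ioi_rpow_lt_top_iff r (Real.log_pos ha), ← Real.image_log_Ioi ha0,
    lintegral_image_eq_lintegral_deriv_mul_of_monotoneOn measurableSet_Ioi hderiv hmono]
  refine iff_of_eq (congrArg (· < ⊤) (setLIntegral_congr_fun measurableSet_Ioi fun s hs ↦ ?_))
  exact ENNReal.ofReal_mul (inv_nonneg.2 (ha0.trans hs).le)

lemma mul_log_rpow_rpow {r : ℝ} (c γ : ℝ) (hr : 1 ≤ r) :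
    (r * Real.log r ^ c) ^ γ = r ^ γ * Real.log r ^ (c * γ) := by
  have hlog : 0 ≤ Real.log r := Real.log_nonneg hr
  rw [Real.mul_rpow (by linarith) (Real.rpow_nonneg hlog c), Real.rpow_mul hlog]

theorem stmt_15_general {a : ℝ} (α β c : ℝ) (ha : 1 < a) (hα : α < -1) (hβ : β = -2 - α) :
    (∫⁻ s in Ioi a,
        ENNReal.ofReal ((s * Real.log s ^ c) ^ β) *
          ∫⁻ t in Ioi s, ENNReal.ofReal ((t * Real.log t ^ c) ^ α)) < ⊤ ↔
      1 / 2 < c := by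
  have hsplit : ∀ s ∈ Ioi a, ENNReal.ofReal ((s * Real.log s ^ c) ^ β) *
        ∫⁻ t in Ioi s, ENNReal.ofReal ((t * Real.log t ^ c) ^ α) =
      ENNReal.ofReal (s ^ β * Real.log s ^ (c * β)) *
        ∫⁻ t in Ioi s, ENNReal.ofReal (t ^ α * Real.log t ^ (c * α)) := fun s hs ↦ by
    have hs1 : 1 < s := ha.trans hs
    rw [mul_log_rpow_rpow c β hs1.le, setLIntegral_congr_fun measurableSet_Ioi
      fun t ht ↦ congrArg ENNReal.ofReal (mul_log_rpow_rpow c α (hs1.trans ht).le)]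
  have hpow : α + β + 1 = -1 := by rw [hβ]; ring
  have hlogpow : c * α + c * β = -2 * c := by rw [hβ]; ring
  rw [setLIntegral_congr_fun measurableSet_Ioi hsplit,
    lintegral_mul_lintegral_Ioi_rpow_mul_log_rpow_lt_top_iff β (c * α) (c * β) ha hα,
    hpow, hlogpow]
  simp only [Real.rpow_neg_one]
  rw [lintegral_Ioi_inv_mul_log_rpow_lt_top_iff _ ha]
  constructor <;> intro <;> linarith

/-- for `α < -1`, `β = -2 - α`, `c > 0` and `φ(r) = r (log r)^c`, the double
integral `∫₂^∞ φ(s)^β (∫ₛ^∞ φ(t)^α dt) ds` is finite if and only if `c > 1/2`. -/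
theorem stmt_15 (α β c : ℝ) (hα : α < -1) (hβ : β = -2 - α) (hc : 0 < c) :
    (∫⁻ s in Ioi (2:ℝ),
        ENNReal.ofReal ((s * Real.log s ^ c) ^ β) *
          ∫⁻ t in Ioi s, ENNReal.ofReal ((t * Real.log t ^ c) ^ α)) < ⊤ ↔
      1 / 2 < c :=
  stmt_15_general α β c one_lt_two hα hβ
end
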